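/- Let A and B be nontrivial groups, let G = A * B, let X be a finite alphabet with a surjective monoid homomorphism φ : X* → G satisfying φ(x⁻¹) = φ(x)⁻¹ for all x ∈ X (where X = Y_A ⊔ Y_B ⊔ Y_A⁻¹ ⊔ Y_B⁻¹ and the images of Y_A, Y_B generate A, B respectively), let ≤ be a left-invariant linear order on G, and let L ⊆ X* be any language with φ(L) = {g ∈ G : 1 < g}. Then G ⊆ φ(Pref(L)); i.e., every element of G is represented by a prefix of some word in L. -/

import Mathlib

/-- The image in the group `G` of a language `L` over `X` under a monoid
homomorphism `φ : X* → G`. -/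
def langImage {X G : Type} [Monoid G] (φ : FreeMonoid X →* G) (L : Language X) : Set G :=
  (fun w => φ (FreeMonoid.ofList w)) '' L

/-- `Pref L`: the language of all prefixes of words in `L`. -/
def Pref {X : Type} (L : Language X) : Language X :=
  {u | ∃ v, u ++ v ∈ L}

abbrev Fam (A B : Type) : Bool → Type := fun b => cond b A B

instance famGroup (A B : Type) [Group A] [Group B] : ∀ b, Group (Fam A B b)
  | true => inferInstanceAs (Group A)
  | false => inferInstanceAs (Group B)

section aux
variable {A B : Type} [Group A] [Group B]

/-- `k` is a nontrivial reduced word starting with a letter of the given factor. -/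
inductive Starts : Bool → Monoid.Coprod A B → Prop
  | a1 (a : A) (ha : a ≠ 1) : Starts true (Monoid.Coprod.inl a)
  | a2 (a : A) (ha : a ≠ 1) (w) (h : Starts false w) : Starts true (Monoid.Coprod.inl a * w)
  | b1 (b : B) (hb : b ≠ 1) : Starts false (Monoid.Coprod.inr b)
  | b2 (b : B) (hb : b ≠ 1) (w) (h : Starts true w) : Starts false (Monoid.Coprod.inr b * w)

def toI : Monoid.Coprod A B →* Monoid.CoprodI (Fam A B) :=
  Monoid.Coprod.lift
    (Monoid.CoprodI.of (M := Fam A B) (i := true)) (Monoid.CoprodI.of (M := Fam A B) (i := false))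

theorem toI_inl (a : A) : toI (Monoid.Coprod.inl a : Monoid.Coprod A B)
    = Monoid.CoprodI.of (M := Fam A B) (i := true) a := Monoid.Coprod.lift_apply_inl _ _ _

theorem toI_inr (a : B) : toI (Monoid.Coprod.inr a : Monoid.Coprod A B)
    = Monoid.CoprodI.of (M := Fam A B) (i := false) a := Monoid.Coprod.lift_apply_inr _ _ _

theorem Starts.word {s : Bool} {k : Monoid.Coprod A B} (h : Starts s k) :
    ∃ w : Monoid.CoprodI.Word (Fam A B), w.prod = toI k ∧ w.fstIdx = some s := by
  induction h with
  | a1 a ha =>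
    refine ⟨Monoid.CoprodI.Word.cons (i := true) a .empty (by simp [Monoid.CoprodI.Word.fstIdx, Monoid.CoprodI.Word.empty]) ha, ?_, ?_⟩
    · exact (Monoid.CoprodI.Word.prod_cons _ _ _ _ _).trans (by simp [toI_inl])
    · exact Monoid.CoprodI.Word.fstIdx_cons _ _ _ _
  | b1 a ha =>
    refine ⟨Monoid.CoprodI.Word.cons (i := false) a .empty (by simp [Monoid.CoprodI.Word.fstIdx, Monoid.CoprodI.Word.empty]) ha, ?_, ?_⟩
    · exact (Monoid.CoprodI.Word.prod_cons _ _ _ _ _).trans (by simp [toI_inr])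
    · exact Monoid.CoprodI.Word.fstIdx_cons _ _ _ _
  | a2 a ha w h ih =>
    obtain ⟨v, hv, hf⟩ := ih
    refine ⟨Monoid.CoprodI.Word.cons (i := true) a v (by simp [hf]) ha, ?_, ?_⟩
    · simp [toI_inl, hv]
    · simp
  | b2 a ha w h ih =>
    obtain ⟨v, hv, hf⟩ := ih
    refine ⟨Monoid.CoprodI.Word.cons (i := false) a v (by simp [hf]) ha, ?_, ?_⟩
    · simp [toI_inr, hv]
    · simp

theorem Starts.unique {s t : Bool} {k : Monoid.Coprod A B} (h : Starts s k) (h' : Starts t k) :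
    s = t := by
  classical
  obtain ⟨w, hw, hs⟩ := h.word
  obtain ⟨v, hv, ht⟩ := h'.word
  have : w = v := Monoid.CoprodI.Word.equiv.symm.injective (hw.trans hv.symm)
  subst this
  rw [hs] at ht
  exact Option.some.inj ht

theorem Starts.inl_mul {s : Bool} {k : Monoid.Coprod A B} (h : Starts s k) (a : A) :
    Monoid.Coprod.inl a * k = 1 ∨ ∃ t, Starts t (Monoid.Coprod.inl a * k) := by
  by_cases ha : a = 1
  · subst ha; right; exact ⟨s, by simpa using h⟩
  cases h with
  | a1 c hc =>
    rw [← map_mul]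
    by_cases h1 : a * c = 1
    · left; simp [h1]
    · exact Or.inr ⟨_, .a1 _ h1⟩
  | a2 c hc w h =>
    rw [← mul_assoc, ← map_mul]
    by_cases h1 : a * c = 1
    · right; exact ⟨false, by simpa [h1] using h⟩
    · exact Or.inr ⟨_, .a2 _ h1 _ h⟩
  | b1 b hb => exact Or.inr ⟨_, .a2 _ ha _ (.b1 b hb)⟩
  | b2 b hb w h => exact Or.inr ⟨_, .a2 _ ha _ (.b2 b hb w h)⟩

theorem Starts.inr_mul {s : Bool} {k : Monoid.Coprod A B} (h : Starts s k) (a : B) :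
    Monoid.Coprod.inr a * k = 1 ∨ ∃ t, Starts t (Monoid.Coprod.inr a * k) := by
  by_cases ha : a = 1
  · subst ha; right; exact ⟨s, by simpa using h⟩
  cases h with
  | b1 c hc =>
    rw [← map_mul]
    by_cases h1 : a * c = 1
    · left; simp [h1]
    · exact Or.inr ⟨_, .b1 _ h1⟩
  | b2 c hc w h =>
    rw [← mul_assoc, ← map_mul]
    by_cases h1 : a * c = 1
    · right; exact ⟨true, by simpa [h1] using h⟩
    · exact Or.inr ⟨_, .b2 _ h1 _ h⟩
  | a1 b hb => exact Or.inr ⟨_, .b2 _ ha _ (.a1 b hb)⟩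
  | a2 b hb w h => exact Or.inr ⟨_, .b2 _ ha _ (.a2 b hb w h)⟩

theorem starts_cover (k : Monoid.Coprod A B) : k = 1 ∨ ∃ t, Starts t k := by
  have key : ∀ m k : Monoid.Coprod A B, (k = 1 ∨ ∃ t, Starts t k) →
      (m * k = 1 ∨ ∃ t, Starts t (m * k)) := by
    intro m
    induction m using Monoid.Coprod.induction_on with
    | inl a =>
      rintro k (rfl | ⟨t, h⟩)
      · by_cases ha : a = 1
        · left; simp [ha]
        · right; exact ⟨true, by simpa using Starts.a1 a ha⟩
      · exact h.inl_mul a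
    | inr a =>
      rintro k (rfl | ⟨t, h⟩)
      · by_cases ha : a = 1
        · left; simp [ha]
        · right; exact ⟨false, by simpa using Starts.b1 a ha⟩
      · exact h.inr_mul a
    | mul x y hx hy =>
      intro k hk
      rw [mul_assoc]
      exact hx _ (hy _ hk)
  simpa using key k 1 (Or.inl rfl)

/-- Right multiplication by a letter cannot change the first factor. -/
theorem Starts.mul_letter {s : Bool} {k x : Monoid.Coprod A B} (h : Starts s k)
    (hx : (∃ a, x = Monoid.Coprod.inl a) ∨ ∃ b, x = Monoid.Coprod.inr b) :
    k * x = 1 ∨ Starts s (k * x) := by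
  induction h with
  | a1 a ha =>
    rcases hx with ⟨c, rfl⟩ | ⟨c, rfl⟩
    · rw [← map_mul]
      by_cases h1 : a * c = 1
      · left; simp [h1]
      · exact Or.inr (.a1 _ h1)
    · right
      by_cases h1 : c = 1
      · simpa [h1] using Starts.a1 a ha
      · exact .a2 _ ha _ (.b1 _ h1)
  | b1 a ha =>
    rcases hx with ⟨c, rfl⟩ | ⟨c, rfl⟩
    · right
      by_cases h1 : c = 1
      · simpa [h1] using Starts.b1 a ha
      · exact .b2 _ ha _ (.a1 _ h1)
    · rw [← map_mul]
      by_cases h1 : a * c = 1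
      · left; simp [h1]
      · exact Or.inr (.b1 _ h1)
  | a2 a ha w h ih =>
    right
    rw [mul_assoc]
    rcases ih with h1 | h1
    · rw [h1, mul_one]; exact .a1 _ ha
    · exact .a2 _ ha _ h1
  | b2 a ha w h ih =>
    right
    rw [mul_assoc]
    rcases ih with h1 | h1
    · rw [h1, mul_one]; exact .b1 _ ha
    · exact .b2 _ ha _ h1

/-- A path leaving the side `s` must pass through `1`. -/
theorem cut {X : Type} (φ : FreeMonoid X →* Monoid.Coprod A B)
    (hx : ∀ x, (∃ a, φ (FreeMonoid.of x) = Monoid.Coprod.inl a) ∨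
      ∃ b, φ (FreeMonoid.of x) = Monoid.Coprod.inr b) (s : Bool) (l : List X) :
    ∀ k, Starts s k → ¬ Starts s (k * φ (FreeMonoid.ofList l)) →
      ∃ u v, l = u ++ v ∧ k * φ (FreeMonoid.ofList u) = 1 := by
  induction l with
  | nil => intro k hk h; exact absurd (by simpa using hk) h
  | cons x l ih =>
    intro k hk h
    rw [FreeMonoid.ofList_cons, map_mul, ← mul_assoc] at h
    rcases hk.mul_letter (hx x) with h1 | h1
    · exact ⟨[x], l, rfl, by simpa using h1⟩
    · obtain ⟨u, v, rfl, hu⟩ := ih _ h1 h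
      refine ⟨x :: u, v, rfl, ?_⟩
      rw [FreeMonoid.ofList_cons, map_mul, ← mul_assoc, hu]

theorem cofinal [Nontrivial A] [Nontrivial B] (lin : LinearOrder (Monoid.Coprod A B))
    (hlin : ∀ h g g' : Monoid.Coprod A B, lin.le g g' → lin.le (h * g) (h * g')) (s : Bool)
    (u : Monoid.Coprod A B) : ∃ w, Starts s w ∧ lin.lt u w := by
  letI := lin
  by_contra! hcon
  obtain ⟨a, ha⟩ := exists_ne (1 : A)
  obtain ⟨b, hb⟩ := exists_ne (1 : B)
  have hopp : ∃ u' : Monoid.Coprod A B, ∀ w, Starts (!s) w → w ≤ u' := by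
    cases s with
    | true =>
      refine ⟨(Monoid.Coprod.inl a)⁻¹ * u, fun w hw => ?_⟩
      simpa using hlin (Monoid.Coprod.inl a)⁻¹ _ _ (hcon _ (.a2 a ha w hw))
    | false =>
      refine ⟨(Monoid.Coprod.inr b)⁻¹ * u, fun w hw => ?_⟩
      simpa using hlin (Monoid.Coprod.inr b)⁻¹ _ _ (hcon _ (.b2 b hb w hw))
  obtain ⟨u', hu'⟩ := hopp
  have hall : ∃ m : Monoid.Coprod A B, ∀ w, w ≤ m := by
    refine ⟨max 1 (max u u'), fun w => ?_⟩
    rcases starts_cover w with rfl | ⟨t, ht⟩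
    · exact le_max_left _ _
    · by_cases hts : t = s
      · subst hts
        exact (hcon _ ht).trans ((le_max_left _ _).trans (le_max_right _ _))
      · have : t = !s := by cases t <;> cases s <;> simp_all
        subst this
        exact (hu' _ ht).trans ((le_max_right _ _).trans (le_max_right _ _))
  obtain ⟨m, hm⟩ := hall
  have hle : ∀ p : Monoid.Coprod A B, p ≤ 1 := fun p => by
    simpa using hlin m⁻¹ _ _ (hm (m * p))
  have hge : ∀ p : Monoid.Coprod A B, 1 ≤ p := fun p => by
    simpa using hlin p _ _ (hle p⁻¹)
  have h1 := le_antisymm (hle (Monoid.Coprod.inl a)) (hge _)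
  exact ha (Monoid.Coprod.inl_injective (h1.trans (map_one _).symm))

end aux

/-- Let `G = A ∗ B` be a free product of nontrivial groups, with a group alphabet
`X = Y_A ⊔ Y_B ⊔ Y_A⁻¹ ⊔ Y_B⁻¹` (realized as `(Y_A ⊕ Y_B) × Bool`) mapping onto
generators of `A` and `B`, and let `≤` be a left-invariant linear order on `G`.
If the language `L` represents the positive cone, then every element of `G` is
represented by a prefix of a word in `L`: `G ⊆ φ(Pref L)`. -/
theorem group_contained_in_image_of_prefixes
    {A B : Type} [Group A] [Group B] [Nontrivial A] [Nontrivial B]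
    {YA YB : Type} [Fintype YA] [Fintype YB]
    (genA : YA → A) (genB : YB → B)
    (hgenA : Subgroup.closure (Set.range genA) = ⊤)
    (hgenB : Subgroup.closure (Set.range genB) = ⊤)
    (φ : FreeMonoid ((YA ⊕ YB) × Bool) →* Monoid.Coprod A B)
    (hφ : Function.Surjective φ)
    (hφA : ∀ y : YA, φ (FreeMonoid.of (Sum.inl y, true)) = Monoid.Coprod.inl (genA y))
    (hφB : ∀ y : YB, φ (FreeMonoid.of (Sum.inr y, true)) = Monoid.Coprod.inr (genB y))
    (hφinv : ∀ (s : YA ⊕ YB) (b : Bool),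
      φ (FreeMonoid.of (s, !b)) = (φ (FreeMonoid.of (s, b)))⁻¹)
    (lin : LinearOrder (Monoid.Coprod A B))
    (hlin : ∀ h g g' : Monoid.Coprod A B, lin.le g g' → lin.le (h * g) (h * g'))
    (L : Language ((YA ⊕ YB) × Bool))
    (hL : langImage φ L = {g : Monoid.Coprod A B | lin.lt 1 g}) :
    ∀ g : Monoid.Coprod A B, g ∈ langImage φ (Pref L) := by
  have hx : ∀ x, (∃ a, φ (FreeMonoid.of x) = Monoid.Coprod.inl a) ∨
      ∃ b, φ (FreeMonoid.of x) = Monoid.Coprod.inr b := by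
    rintro ⟨y | y, b⟩ <;> cases b
    · left; exact ⟨(genA y)⁻¹, by rw [map_inv, ← hφA]; exact hφinv _ true⟩
    · left; exact ⟨_, hφA y⟩
    · right; exact ⟨(genB y)⁻¹, by rw [map_inv, ← hφB]; exact hφinv _ true⟩
    · right; exact ⟨_, hφB y⟩
  have hpos : ∀ h, lin.lt 1 h → ∃ l ∈ L, φ (FreeMonoid.ofList l) = h := by
    intro h hh
    have : h ∈ langImage φ L := by rw [hL]; exact hh
    exact this
  intro g
  rcases starts_cover g⁻¹ with hg | ⟨s, hs⟩
  · obtain ⟨w, -, hw⟩ := cofinal lin hlin true 1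
    obtain ⟨l, hl, -⟩ := hpos w hw
    refine ⟨[], ⟨l, hl⟩, ?_⟩
    rw [inv_eq_one.1 hg]
    exact map_one φ
  · obtain ⟨w, hw, hlt⟩ := cofinal lin hlin (!s) g⁻¹
    have hgw : lin.lt 1 (g * w) := by
      letI := lin
      change 1 < g * w
      refine lt_of_le_of_ne ?_ ?_
      · simpa using hlin g _ _ (le_of_lt hlt)
      · intro h
        have h2 : g⁻¹ = w := inv_eq_of_mul_eq_one_right h.symm
        exact (ne_of_lt hlt) h2
    obtain ⟨l, hl, hlw⟩ := hpos _ hgw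
    obtain ⟨u, v, rfl, hu⟩ := cut φ hx s l g⁻¹ hs (by
      rw [hlw, inv_mul_cancel_left]
      intro h
      have := h.unique hw
      cases s <;> simp at this)
    exact ⟨u, ⟨v, hl⟩, (inv_mul_eq_one.1 hu).symm⟩
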